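/- Let F be a Ferrers diagram of semiperimeter n+1. If c ∈ Rec_min(G(F)) with CanonTop(c) = (U^0, V^1, U^1, …), then c = minrec(c); that is, for every j ∈ {1,…,n}: c_j = |{ℓ ∈ V^k : j < ℓ and k > i}| if j ∈ U^i, and c_j = |{ℓ ∈ U^k : ℓ < j and k ≥ i}| if j ∈ V^i. -/

import Mathlib

open Classical

/-- A Ferrers diagram of semiperimeter `n + 1`, encoded by the set of its row labels
(labels `0, …, n` run along the south-east border; `0` labels the top row and the
last label `n` is a column label). -/
structure Ferrers (n : ℕ) where
  rows : Finset (Fin (n + 1))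
  zero_mem : 0 ∈ rows
  last_not_mem : Fin.last n ∉ rows

namespace Ferrers

/-- `(i, j)` is a cell of the diagram: `i` is a row label, `j` a column label, `i < j`. -/
def Cell {n : ℕ} (F : Ferrers n) (i j : Fin (n + 1)) : Prop :=
  i ∈ F.rows ∧ j ∉ F.rows ∧ i < j

/-- Adjacency in the Ferrers graph `G(F)`. -/
def Adj {n : ℕ} (F : Ferrers n) (u v : Fin (n + 1)) : Prop :=
  F.Cell u v ∨ F.Cell v u

/-- Degree of a vertex in `G(F)`. -/
noncomputable def deg {n : ℕ} (F : Ferrers n) (v : Fin (n + 1)) : ℕ :=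
  {u | F.Adj v u}.ncard

/-- Toppling a single vertex.  The height at the sink `0` is kept equal to `c 0`
(grains sent to the sink vanish); toppling the sink sends one grain to each of
its neighbours. -/
noncomputable def topple {n : ℕ} (F : Ferrers n) (c : Fin (n + 1) → ℕ)
    (v : Fin (n + 1)) : Fin (n + 1) → ℕ :=
  fun u =>
    if u = 0 then c 0
    else if u = v then c v - F.deg v
    else if F.Adj v u then c u + 1
    else c u

/-- Toppling the vertices of a list in order. -/
noncomputable def toppleList {n : ℕ} (F : Ferrers n) (c : Fin (n + 1) → ℕ)
    (l : List (Fin (n + 1))) : Fin (n + 1) → ℕ :=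
  l.foldl F.topple c

/-- Simultaneous toppling of a set of vertices. -/
noncomputable def toppleSet {n : ℕ} (F : Ferrers n) (c : Fin (n + 1) → ℕ)
    (S : Set (Fin (n + 1))) : Fin (n + 1) → ℕ :=
  fun u =>
    if u = 0 then c 0
    else c u + {w ∈ S | F.Adj w u}.ncard - if u ∈ S then F.deg u else 0

/-- A configuration is stable if every non-sink vertex has fewer grains than its degree. -/
def Stable {n : ℕ} (F : Ferrers n) (c : Fin (n + 1) → ℕ) : Prop :=
  ∀ v, v ≠ 0 → c v < F.deg v

/-- A Dhar (burning) ordering for `c`: an ordering `v₀ = 0, v₁, …, vₙ` of all the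
vertices such that each `vᵢ` (`i ≥ 1`) is unstable after toppling `v₀, …, v_{i-1}`. -/
def DharSeq {n : ℕ} (F : Ferrers n) (c : Fin (n + 1) → ℕ) (l : List (Fin (n + 1))) : Prop :=
  l.length = n + 1 ∧ l.Nodup ∧ l.head? = some 0 ∧
    ∀ i, ∀ h : i < l.length, 1 ≤ i →
      F.deg (l.get ⟨i, h⟩) ≤ F.toppleList c (l.take i) (l.get ⟨i, h⟩)

/-- Recurrent configurations (via Dhar's criterion).  The height at the sink is
normalised to `0`. -/
def Recurrent {n : ℕ} (F : Ferrers n) (c : Fin (n + 1) → ℕ) : Prop :=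
  c 0 = 0 ∧ F.Stable c ∧ ∃ l, F.DharSeq c l

/-- Minimal recurrent configurations: recurrent with minimal total number of grains. -/
def RecMin {n : ℕ} (F : Ferrers n) (c : Fin (n + 1) → ℕ) : Prop :=
  F.Recurrent c ∧ ∀ c', F.Recurrent c' → (∑ v, c v) ≤ ∑ v, c' v

/-- Canonical toppling: block `0` is `{0}` (the sink); from then on, blocks with odd
index are the sets of currently unstable column vertices and blocks with even index
the sets of currently unstable row vertices.  The first component is the configuration
just before toppling the block recorded in the second component. -/
noncomputable def canonAux {n : ℕ} (F : Ferrers n) (c : Fin (n + 1) → ℕ) :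
    ℕ → ((Fin (n + 1) → ℕ) × Set (Fin (n + 1)))
  | 0 => (c, {0})
  | k + 1 =>
    let c' := F.toppleSet (canonAux F c k).1 (canonAux F c k).2
    (c', {v | v ≠ 0 ∧ (if k % 2 = 0 then v ∉ F.rows else v ∈ F.rows) ∧ F.deg v ≤ c' v})

/-- The `k`-th block of the canonical toppling of `c`:
`canonTop F c 0 = U⁰ = {0}`, `canonTop F c (2i-1) = Vⁱ`, `canonTop F c (2i) = Uⁱ`. -/
noncomputable def canonTop {n : ℕ} (F : Ferrers n) (c : Fin (n + 1) → ℕ) (k : ℕ) :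
    Set (Fin (n + 1)) :=
  (F.canonAux c k).2

/-- The configuration just before toppling the `k`-th block of the canonical toppling. -/
noncomputable def canonConfig {n : ℕ} (F : Ferrers n) (c : Fin (n + 1) → ℕ) (k : ℕ) :
    Fin (n + 1) → ℕ :=
  (F.canonAux c k).1

/-- The index of the block of the canonical toppling of `c` containing `v`. -/
noncomputable def bIdx {n : ℕ} (F : Ferrers n) (c : Fin (n + 1) → ℕ) (v : Fin (n + 1)) : ℕ :=
  sInf {k | v ∈ F.canonTop c k}

/-- `T` is a EW-tableau on `F` (entries of non-cells are normalised to `false`):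
the top row contains only `1`s, every other row contains a `0`, and there is no
rectangle with two diagonally opposite `0`s and two `1`s in the other corners. -/
def IsEW {n : ℕ} (F : Ferrers n) (T : Fin (n + 1) → Fin (n + 1) → Bool) : Prop :=
  (∀ i j, ¬F.Cell i j → T i j = false) ∧
  (∀ j, F.Cell 0 j → T 0 j = true) ∧
  (∀ i, i ∈ F.rows → i ≠ 0 → ∃ j, F.Cell i j ∧ T i j = false) ∧
  (∀ i i' j j', F.Cell i j → F.Cell i j' → F.Cell i' j → F.Cell i' j' →
    T i j = T i' j' → T i j' = T i' j → T i j = T i j')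

/-- The configuration associated to a tableau: row vertices count the `1`s in their
row, column vertices count the `0`s in their column (the sink is normalised to `0`). -/
noncomputable def phiTC {n : ℕ} (F : Ferrers n) (T : Fin (n + 1) → Fin (n + 1) → Bool) :
    Fin (n + 1) → ℕ :=
  fun v =>
    if v = 0 then 0
    else if v ∈ F.rows then {j | F.Cell v j ∧ T v j = true}.ncard
    else {i | F.Cell i v ∧ T i v = false}.ncard

/-- The tableau associated to a (minimal recurrent) configuration: a cell `(i, j)`
gets a `1` exactly when `i` lies in an earlier block than `j` in the canonical
toppling of `c`. -/
noncomputable def phiCT {n : ℕ} (F : Ferrers n) (c : Fin (n + 1) → ℕ) :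
    Fin (n + 1) → Fin (n + 1) → Bool :=
  fun i j => if F.Cell i j ∧ F.bIdx c i < F.bIdx c j then true else false

/-- The supplementary tableau of `T`: `S i j = 1` exactly when the row vertex `i`
lies in an earlier block than the column vertex `j` in `CanonTop (φ_TC T)`. -/
noncomputable def suppS {n : ℕ} (F : Ferrers n) (T : Fin (n + 1) → Fin (n + 1) → Bool)
    (i j : Fin (n + 1)) : Bool :=
  if F.bIdx (F.phiTC T) i < F.bIdx (F.phiTC T) j then true else false

/-- The entry of `T` in cell `(j, k)` is a cornersupport entry. -/
def Cornersupport {n : ℕ} (F : Ferrers n) (T : Fin (n + 1) → Fin (n + 1) → Bool)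
    (j k : Fin (n + 1)) : Prop :=
  ∃ j' k', j' ∈ F.rows ∧ k' ∉ F.rows ∧ j' ≠ j ∧ k' ≠ k ∧
    F.suppS T j' k' = !(T j k) ∧ F.suppS T j' k = T j k ∧ F.suppS T j k' = T j k

/-- `ν_v(T)`: the number of non-cornersupport `0`s in row `v` (if `v` is a row label),
resp. non-cornersupport `1`s in column `v` (if `v` is a column label). -/
noncomputable def nu {n : ℕ} (F : Ferrers n) (T : Fin (n + 1) → Fin (n + 1) → Bool)
    (v : Fin (n + 1)) : ℕ :=
  if v ∈ F.rows then {k | F.Cell v k ∧ T v k = false ∧ ¬F.Cornersupport T v k}.ncard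
  else {i | F.Cell i v ∧ T i v = true ∧ ¬F.Cornersupport T i v}.ncard

/-- `μ_v(c)`: if `v ∈ Uⁱ`, the number of `k ∈ Vⁱ` with `k > v`; if `v ∈ Vⁱ`,
the number of `k ∈ U^{i-1}` with `k < v`.  In both cases the relevant block is the
one immediately preceding the block of `v`. -/
noncomputable def mu {n : ℕ} (F : Ferrers n) (c : Fin (n + 1) → ℕ) (v : Fin (n + 1)) : ℕ :=
  if v ∈ F.rows then {k | v < k ∧ k ∈ F.canonTop c (F.bIdx c v - 1)}.ncard
  else {k | k < v ∧ k ∈ F.canonTop c (F.bIdx c v - 1)}.ncard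

/-- The minimal recurrent configuration with the same canonical toppling as `c`:
if `j ∈ Uⁱ` then `minrec c j = |{ℓ ∈ Vᵏ : j < ℓ, k > i}|`, and if `j ∈ Vⁱ` then
`minrec c j = |{ℓ ∈ Uᵏ : ℓ < j, k ≥ i}|` (blocks `Vᵏ` sit at odd index `2k - 1`,
blocks `Uᵏ` at even index `2k`). -/
noncomputable def minrecFun {n : ℕ} (F : Ferrers n) (c : Fin (n + 1) → ℕ) :
    Fin (n + 1) → ℕ :=
  fun j =>
    if j = 0 then 0
    else if j ∈ F.rows then
      {l | j < l ∧ ∃ k, F.bIdx c j < 2 * k + 1 ∧ l ∈ F.canonTop c (2 * k + 1)}.ncard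
    else
      {l | l < j ∧ ∃ k, F.bIdx c j < 2 * k ∧ l ∈ F.canonTop c (2 * k)}.ncard

/-- The number of edges of `G(F)` (equivalently, the number of cells of `F`). -/
noncomputable def edgeCount {n : ℕ} (F : Ferrers n) : ℕ :=
  {p : Fin (n + 1) × Fin (n + 1) | F.Cell p.1 p.2}.ncard

end Ferrers

/-!
The block indices of the canonical toppling of `c` rank the vertices so that neighbours have
different ranks, and each non-sink vertex `v` is unstable once its lower-ranked neighbours have
toppled. Hence `c v` is at least `deg v` minus the number of these neighbours, that is, at least the
number of higher-ranked neighbours of `v`. The configuration given by these lower bounds is itself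
recurrent: if the fire of Dhar's algorithm has burnt a set of vertices, an unburnt vertex of least
rank catches fire next. By minimality `c` attains all the bounds. In `G(F)` the neighbours of a row
`j` are the columns `ℓ > j`, and those of a column `j` are the rows `ℓ < j`.
-/

namespace Ferrers

variable {n : ℕ} {F : Ferrers n} {c c' : Fin (n + 1) → ℕ} {u v w : Fin (n + 1)}
  {S T : Set (Fin (n + 1))} {l : List (Fin (n + 1))} {i k : ℕ}

lemma adj_comm : F.Adj u v ↔ F.Adj v u :=
  or_comm

lemma adj_iff_of_mem_rows (hv : v ∈ F.rows) : F.Adj u v ↔ v < u ∧ u ∉ F.rows := by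
  simp [Adj, Cell, hv, and_comm]

lemma adj_iff_of_notMem_rows (hv : v ∉ F.rows) : F.Adj u v ↔ u < v ∧ u ∈ F.rows := by
  simp [Adj, Cell, hv, and_comm]

lemma Adj.mem_rows_iff (h : F.Adj u v) : u ∈ F.rows ↔ v ∉ F.rows := by
  by_cases hv : v ∈ F.rows
  · simp [hv, ((adj_iff_of_mem_rows hv).1 h).2]
  · simp [hv, ((adj_iff_of_notMem_rows hv).1 h).2]

/-- The number of neighbours of `v` in `S`, that is, the number of grains that `v` receives when
every vertex of `S` topples once. -/
noncomputable def degIn (F : Ferrers n) (S : Set (Fin (n + 1))) (v : Fin (n + 1)) : ℕ :=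
  {w ∈ S | F.Adj w v}.ncard

lemma degIn_mono (h : S ⊆ T) : F.degIn S v ≤ F.degIn T v :=
  Set.ncard_le_ncard fun _ hw => ⟨h hw.1, hw.2⟩

lemma degIn_empty : F.degIn ∅ v = 0 := by
  simp [degIn]

lemma degIn_univ : F.degIn Set.univ v = F.deg v := by
  simp only [degIn, deg, Set.mem_univ, true_and, adj_comm]

lemma degIn_le_deg : F.degIn S v ≤ F.deg v :=
  degIn_univ (F := F) (v := v) ▸ degIn_mono (Set.subset_univ S)

lemma degIn_union (h : Disjoint S T) : F.degIn (S ∪ T) v = F.degIn S v + F.degIn T v := by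
  have hsep : {w ∈ S ∪ T | F.Adj w v} = {w ∈ S | F.Adj w v} ∪ {w ∈ T | F.Adj w v} :=
    Set.union_inter_distrib_right S T _
  rw [degIn, hsep, Set.ncard_union_eq (h.mono (fun _ hw => hw.1) fun _ hw => hw.1)]
  rfl

lemma degIn_congr (h : ∀ w, F.Adj w v → (w ∈ S ↔ w ∈ T)) : F.degIn S v = F.degIn T v := by
  simp only [degIn, and_congr_left (h _)]

lemma degIn_singleton : F.degIn {w} v = if F.Adj w v then 1 else 0 := by
  split_ifs with h
  · exact Set.ncard_eq_one.2 ⟨w, by ext; simp +contextual [h]⟩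
  · have hempty : F.degIn {w} v = F.degIn ∅ v :=
      degIn_congr fun u hu => iff_of_false (fun huw => h (huw ▸ hu)) (Set.notMem_empty u)
    rw [hempty, degIn_empty]

/-! ### Dhar's burning criterion -/

/-- A set of burnt vertices containing the sink from which the fire of Dhar's algorithm for `c`
cannot spread: no further vertex becomes unstable once `S` has toppled. -/
def FireClosed (F : Ferrers n) (c : Fin (n + 1) → ℕ) (S : Set (Fin (n + 1))) : Prop :=
  0 ∈ S ∧ ∀ v ∉ S, c v + F.degIn S v < F.deg v

/-- An initial segment of a burning order for `c`: the conditions of `DharSeq`, without the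
requirement that every vertex be listed, and with the heights after toppling made explicit. -/
def BurningList (F : Ferrers n) (c : Fin (n + 1) → ℕ) (l : List (Fin (n + 1))) : Prop :=
  l.Nodup ∧ l.head? = some 0 ∧
    ∀ i, ∀ h : i < l.length, 1 ≤ i → F.deg l[i] ≤ c l[i] + F.degIn {w | w ∈ l.take i} l[i]

lemma toppleList_apply_of_notMem (hv : v ≠ 0) (hl : l.Nodup) (hvl : v ∉ l) :
    F.toppleList c l v = c v + F.degIn {w | w ∈ l} v := by
  induction l generalizing c with
  | nil => simp [toppleList, degIn]
  | cons a l ih =>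
    obtain ⟨hal, hl⟩ := List.nodup_cons.1 hl
    obtain ⟨hva, hvl⟩ := not_or.1 (mt List.mem_cons.2 hvl)
    have hset : {w | w ∈ a :: l} = {a} ∪ {w | w ∈ l} := by ext; simp
    have htopple : F.topple c a v = c v + F.degIn {a} v := by
      rw [degIn_singleton, topple, if_neg hv, if_neg hva]
      split_ifs <;> rfl
    calc F.toppleList c (a :: l) v = F.toppleList (F.topple c a) l v := rfl
      _ = F.topple c a v + F.degIn {w | w ∈ l} v := ih hl hvl
      _ = c v + F.degIn {w | w ∈ a :: l} v := by
        rw [htopple, hset, degIn_union (Set.disjoint_singleton_left.2 hal), add_assoc]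

lemma dharSeq_iff_burningList : F.DharSeq c l ↔ l.length = n + 1 ∧ F.BurningList c l := by
  refine and_congr_right fun _ => and_congr_right fun hl => and_congr_right fun hhead =>
    forall₃_congr fun i hi hi1 => ?_
  have hnotMem : l[i] ∉ l.take i := fun h =>
    List.disjoint_take_drop hl le_rfl h (List.drop_eq_getElem_cons hi ▸ List.mem_cons_self)
  have hzero : 0 ∈ l.take i :=
    List.mem_of_mem_head? (by rw [List.head?_take, if_neg (by omega), hhead]; rfl)
  have hne : l[i] ≠ 0 := fun h => hnotMem (h.symm ▸ hzero)
  rw [List.get_eq_getElem,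
    toppleList_apply_of_notMem hne (hl.sublist (List.take_sublist _ _)) hnotMem]

lemma BurningList.zero_mem (hl : F.BurningList c l) : 0 ∈ l :=
  List.mem_of_mem_head? hl.2.1

lemma BurningList.concat (hl : F.BurningList c l) (hv : v ∉ l)
    (hfire : F.deg v ≤ c v + F.degIn {w | w ∈ l} v) : F.BurningList c (l ++ [v]) := by
  refine ⟨List.nodup_append'.2 ⟨hl.1, List.nodup_singleton v, by simpa using hv⟩, ?_, ?_⟩
  · rw [List.head?_append, hl.2.1, Option.some_or]
  · intro i hi hi1
    rcases Nat.lt_or_ge i l.length with hil | hil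
    · simpa only [List.getElem_append_left hil, List.take_append_of_le_length hil.le]
        using hl.2.2 i hil hi1
    · rw [List.length_append, List.length_singleton] at hi
      obtain rfl : i = l.length := by omega
      simpa using hfire

lemma BurningList.subset_of_fireClosed (hl : F.BurningList c l) (hS : F.FireClosed c S) :
    ∀ v ∈ l, v ∈ S := by
  refine List.forall_mem_iff_forall_getElem.2 fun i => ?_
  induction i using Nat.strong_induction_on with
  | _ i ih =>
    intro hi
    rcases Nat.eq_zero_or_pos i with rfl | hpos
    · have hhead := hl.2.1
      rw [List.head?_eq_getElem?, List.getElem?_eq_getElem hi, Option.some_inj] at hhead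
      exact hhead ▸ hS.1
    · have htake : {w | w ∈ l.take i} ⊆ S := fun w hw => by
        obtain ⟨j, hj, rfl⟩ := List.mem_take_iff_getElem.1 hw
        exact ih j (by omega) (by omega)
      by_contra hnot
      have hfire := hl.2.2 i hi hpos
      have hclosed := hS.2 _ hnot
      have hmono := degIn_mono (F := F) (v := l[i]) htake
      omega

lemma exists_burningList_length (h : ∀ S, F.FireClosed c S → S = Set.univ) :
    ∀ k ≤ n, ∃ l, l.length = k + 1 ∧ F.BurningList c l
  | 0, _ => ⟨[0], rfl, List.nodup_singleton 0, rfl, fun _ hi hi1 => absurd hi hi1.not_gt⟩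
  | k + 1, hk => by
    obtain ⟨l, hlen, hl⟩ := exists_burningList_length h k (by omega)
    obtain ⟨v, hv⟩ : ∃ v, v ∉ l.toFinset := by
      by_contra! hall
      have hcard := l.toFinset_card_le
      rw [Finset.eq_univ_of_forall hall, Finset.card_univ, Fintype.card_fin] at hcard
      omega
    have hopen : ¬F.FireClosed c {w | w ∈ l} := fun hclosed =>
      hv (List.mem_toFinset.2 (h _ hclosed ▸ Set.mem_univ v : v ∈ {w | w ∈ l}))
    obtain ⟨u, hu, hfire⟩ : ∃ u ∉ l, F.deg u ≤ c u + F.degIn {w | w ∈ l} u := by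
      simpa [FireClosed, hl.zero_mem] using hopen
    exact ⟨l ++ [u], by simp [hlen], hl.concat hu hfire⟩

theorem exists_dharSeq_iff : (∃ l, F.DharSeq c l) ↔ ∀ S, F.FireClosed c S → S = Set.univ := by
  simp only [dharSeq_iff_burningList]
  refine ⟨fun ⟨l, hlen, hl⟩ S hS => ?_, fun h => exists_burningList_length h n le_rfl⟩
  have hcard : l.toFinset.card = Fintype.card (Fin (n + 1)) := by
    rw [List.toFinset_card_of_nodup hl.1, hlen, Fintype.card_fin]
  have hmem : ∀ v, v ∈ l := fun v =>
    List.mem_toFinset.1 (Finset.eq_univ_of_card _ hcard ▸ Finset.mem_univ v)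
  exact Set.eq_univ_of_forall fun v => hl.subset_of_fireClosed hS v (hmem v)

/-! ### Configurations defined by a ranking of the vertices -/

section Rank

variable {α : Type*} [LinearOrder α] {b : Fin (n + 1) → α}

/-- The configuration in which every non-sink vertex holds one grain for each neighbour of higher
rank. -/
noncomputable def rankConfig (F : Ferrers n) (b : Fin (n + 1) → α) : Fin (n + 1) → ℕ :=
  fun v => if v = 0 then 0 else F.degIn {w | b v < b w} v

lemma rankConfig_of_ne_zero (hv : v ≠ 0) : F.rankConfig b v = F.degIn {w | b v < b w} v :=
  if_neg hv

lemma degIn_lt_add_degIn_gt (hb : ∀ u v, F.Adj u v → b u ≠ b v) :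
    F.degIn {w | b w < b v} v + F.degIn {w | b v < b w} v = F.deg v := by
  have hdisj : Disjoint {w | b w < b v} {w | b v < b w} :=
    Set.disjoint_left.2 fun _ h h' => lt_asymm h h'
  rw [← degIn_union hdisj, ← degIn_univ]
  exact degIn_congr fun w hw => iff_of_true (hb w v hw).lt_or_gt (Set.mem_univ w)

lemma rankConfig_le (hb : ∀ u v, F.Adj u v → b u ≠ b v)
    (hc : ∀ v ≠ 0, F.deg v ≤ c v + F.degIn {w | b w < b v} v) : F.rankConfig b ≤ c := by
  refine Pi.le_def.2 fun v => ?_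
  by_cases hv : v = 0
  · exact (if_pos hv).trans_le (Nat.zero_le _)
  · have hdeg := degIn_lt_add_degIn_gt (v := v) hb
    have hcv := hc v hv
    rw [rankConfig_of_ne_zero hv]
    omega

lemma exists_dharSeq_rankConfig (hb : ∀ u v, F.Adj u v → b u ≠ b v) :
    ∃ l, F.DharSeq (F.rankConfig b) l := by
  refine exists_dharSeq_iff.2 fun S hS => ?_
  by_contra hne
  obtain ⟨v, hv, hmin⟩ := Set.exists_min_image Sᶜ b Sᶜ.toFinite (Set.nonempty_compl.2 hne)
  have hlower : {w | b w < b v} ⊆ S := fun w hw => by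
    by_contra hwS
    exact (hmin w hwS).not_gt hw
  have hv0 : v ≠ 0 := fun h => hv (h ▸ hS.1)
  have hclosed := hS.2 v hv
  have hmono := degIn_mono (F := F) (v := v) hlower
  have hdeg := degIn_lt_add_degIn_gt (v := v) hb
  rw [rankConfig_of_ne_zero hv0] at hclosed
  omega

theorem eq_rankConfig_of_minimal (hmin : Minimal F.Recurrent c)
    (hb : ∀ u v, F.Adj u v → b u ≠ b v)
    (hc : ∀ v ≠ 0, F.deg v ≤ c v + F.degIn {w | b w < b v} v) : c = F.rankConfig b :=
  have hle : F.rankConfig b ≤ c := rankConfig_le hb hc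
  have hstable : F.Stable (F.rankConfig b) := fun v hv => (hle v).trans_lt (hmin.prop.2.1 v hv)
  hmin.eq_of_ge ⟨if_pos rfl, hstable, exists_dharSeq_rankConfig hb⟩ hle

end Rank

lemma RecMin.minimal (hc : F.RecMin c) : Minimal F.Recurrent c := by
  refine ⟨hc.1, fun c' hc' hle v => ?_⟩
  have hsum : ∑ v, c' v = ∑ v, c v := (Finset.sum_le_sum fun v _ => hle v).antisymm (hc.2 c' hc')
  exact ((Finset.sum_eq_sum_iff_of_le fun v _ => hle v).1 hsum v (Finset.mem_univ v)).ge

/-! ### Canonical toppling -/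

/-- `c'` arises from `c` by toppling every vertex of `S` once; the grains lost by the vertices of
`S` are added on the left to avoid a truncated subtraction. -/
def ToppledOnce (F : Ferrers n) (c : Fin (n + 1) → ℕ) (S : Set (Fin (n + 1)))
    (c' : Fin (n + 1) → ℕ) : Prop :=
  ∀ v ≠ 0, c' v + (if v ∈ S then F.deg v else 0) = c v + F.degIn S v

lemma ToppledOnce.apply_lt_deg (h : F.ToppledOnce c S c') (hs : F.Stable c) (hv : v ≠ 0)
    (hvS : v ∈ S) : c' v < F.deg v := by
  have hbal := h v hv
  have hstable := hs v hv
  have hdeg := degIn_le_deg (F := F) (S := S) (v := v)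
  rw [if_pos hvS] at hbal
  omega

lemma ToppledOnce.toppleSet (h : F.ToppledOnce c S c') (hdisj : Disjoint S T)
    (hT : ∀ v ∈ T, v ≠ 0 → F.deg v ≤ c' v) :
    F.ToppledOnce c (S ∪ T) (F.toppleSet c' T) := by
  intro v hv
  have hbal := h v hv
  have hval : F.toppleSet c' T v = c' v + F.degIn T v - if v ∈ T then F.deg v else 0 := if_neg hv
  rw [hval, degIn_union hdisj]
  by_cases hvT : v ∈ T
  · have hvS : v ∉ S := fun hvS => hdisj.notMem_of_mem_left hvS hvT
    have hunstable := hT v hvT hv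
    simp only [hvT, hvS, Set.mem_union, or_true, if_true, if_false] at hbal ⊢
    omega
  · simp only [hvT, Set.mem_union, or_false, if_false] at hbal ⊢
    omega

/-- The set of vertices toppled before the `k`-th block of the canonical toppling of `c`. -/
def toppledBefore (F : Ferrers n) (c : Fin (n + 1) → ℕ) (k : ℕ) : Set (Fin (n + 1)) :=
  ⋃ i < k, F.canonTop c i

lemma toppledBefore_zero : F.toppledBefore c 0 = ∅ := by
  simp [toppledBefore]

lemma toppledBefore_succ : F.toppledBefore c (k + 1) = F.toppledBefore c k ∪ F.canonTop c k :=
  Set.biUnion_lt_succ _ _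

lemma toppledBefore_mono : Monotone (F.toppledBefore c) :=
  monotone_nat_of_le_succ fun _ => toppledBefore_succ ▸ Set.subset_union_left

lemma canonTop_zero : F.canonTop c 0 = {0} :=
  rfl

lemma mem_canonTop_succ : v ∈ F.canonTop c (k + 1) ↔
    v ≠ 0 ∧ (if k % 2 = 0 then v ∉ F.rows else v ∈ F.rows) ∧
      F.deg v ≤ F.canonConfig c (k + 1) v :=
  Iff.rfl

lemma deg_le_canonConfig (hk : v ∈ F.canonTop c k) (hv : v ≠ 0) :
    F.deg v ≤ F.canonConfig c k v := by
  cases k with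
  | zero => exact absurd hk hv
  | succ k => exact (mem_canonTop_succ.1 hk).2.2

lemma mem_rows_iff_even (hk : v ∈ F.canonTop c k) : v ∈ F.rows ↔ Even k := by
  cases k with
  | zero => simp [Set.mem_singleton_iff.1 hk, F.zero_mem]
  | succ k =>
    have hparity := (mem_canonTop_succ.1 hk).2.1
    split_ifs at hparity with hk <;>
      simp [hparity, Nat.even_add_one, Nat.even_iff, hk]

section Stable

variable (hs : F.Stable c)
include hs

lemma ToppledOnce.disjoint_canonTop
    (h : F.ToppledOnce c (F.toppledBefore c k) (F.canonConfig c k)) :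
    Disjoint (F.toppledBefore c k) (F.canonTop c k) := by
  cases k with
  | zero => simp [toppledBefore_zero]
  | succ k =>
    refine Set.disjoint_left.2 fun v hbefore hv => ?_
    obtain ⟨hv0, -, hunstable⟩ := mem_canonTop_succ.1 hv
    exact (h.apply_lt_deg hs hv0 hbefore).not_ge hunstable

lemma toppledOnce_canonConfig (k : ℕ) :
    F.ToppledOnce c (F.toppledBefore c k) (F.canonConfig c k) := by
  induction k with
  | zero => intro v _; simp [toppledBefore_zero, degIn_empty, canonConfig, canonAux]
  | succ k ih =>
    rw [toppledBefore_succ]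
    exact ih.toppleSet (ih.disjoint_canonTop hs) fun _ => deg_le_canonConfig

lemma pairwise_disjoint_canonTop : Pairwise (Function.onFun Disjoint (F.canonTop c)) :=
  (pairwise_disjoint_on _).2 fun _ k hik =>
    ((toppledOnce_canonConfig hs k).disjoint_canonTop hs).mono_left
      (Set.subset_biUnion_of_mem (u := F.canonTop c) (Set.mem_Iio.2 hik))

lemma exists_fireClosed_toppledBefore : ∃ m, F.FireClosed c (F.toppledBefore c m) := by
  obtain ⟨m, hm⟩ : ∃ m, ∀ k ≥ m, F.toppledBefore c m = F.toppledBefore c k :=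
    WellFoundedGT.monotone_chain_condition ⟨F.toppledBefore c, toppledBefore_mono⟩
  have hzero : 0 ∈ F.toppledBefore c m := by
    rw [hm (m + 1) (by omega)]
    exact toppledBefore_mono (Nat.succ_pos m) (by simp [toppledBefore, canonTop_zero])
  refine ⟨m, hzero, fun v hv => ?_⟩
  by_contra! hfire
  obtain ⟨k, hmk, hparity⟩ :
      ∃ k ≥ m, if k % 2 = 0 then v ∉ F.rows else v ∈ F.rows := by
    by_cases hr : v ∈ F.rows
    · exact ⟨2 * m + 1, by omega, by simpa [Nat.add_mod] using hr⟩
    · exact ⟨2 * m, by omega, by simpa using hr⟩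
  have hv0 : v ≠ 0 := fun h => hv (h ▸ hzero)
  have hbal := toppledOnce_canonConfig hs (k + 1) v hv0
  rw [← hm (k + 1) (by omega), if_neg hv] at hbal
  have hblock : v ∈ F.canonTop c (k + 1) := mem_canonTop_succ.2 ⟨hv0, hparity, by omega⟩
  exact hv (hm (k + 2) (by omega) ▸ toppledBefore_succ ▸ Or.inr hblock)

end Stable

namespace Recurrent

variable (hc : F.Recurrent c)
include hc

lemma exists_mem_canonTop (v : Fin (n + 1)) : ∃ k, v ∈ F.canonTop c k := by
  obtain ⟨m, hm⟩ := exists_fireClosed_toppledBefore hc.2.1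
  have hv : v ∈ F.toppledBefore c m := exists_dharSeq_iff.1 hc.2.2 _ hm ▸ Set.mem_univ v
  obtain ⟨k, -, hk⟩ := Set.mem_iUnion₂.1 hv
  exact ⟨k, hk⟩

lemma mem_canonTop_iff : v ∈ F.canonTop c k ↔ F.bIdx c v = k := by
  have hmem : v ∈ F.canonTop c (F.bIdx c v) := Nat.sInf_mem (hc.exists_mem_canonTop v)
  refine ⟨fun hk => ?_, fun h => h ▸ hmem⟩
  by_contra hne
  exact (pairwise_disjoint_canonTop hc.2.1 hne).notMem_of_mem_left hmem hk

lemma mem_rows_iff_even_bIdx : v ∈ F.rows ↔ Even (F.bIdx c v) :=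
  mem_rows_iff_even (hc.mem_canonTop_iff.2 rfl)

lemma bIdx_ne_of_adj (h : F.Adj u v) : F.bIdx c u ≠ F.bIdx c v := fun heq => by
  have hrows := h.mem_rows_iff
  rw [hc.mem_rows_iff_even_bIdx, hc.mem_rows_iff_even_bIdx, heq] at hrows
  tauto

lemma deg_le_add_degIn_bIdx_lt (hv : v ≠ 0) :
    F.deg v ≤ c v + F.degIn {w | F.bIdx c w < F.bIdx c v} v := by
  have hbefore : F.toppledBefore c (F.bIdx c v) = {w | F.bIdx c w < F.bIdx c v} := by
    ext w
    simp [toppledBefore, hc.mem_canonTop_iff]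
  have hbal := toppledOnce_canonConfig hc.2.1 (F.bIdx c v) v hv
  have hunstable := deg_le_canonConfig (hc.mem_canonTop_iff.2 rfl) hv
  rw [hbefore] at hbal
  simp only [Set.mem_ofPred_eq, lt_irrefl, if_false] at hbal
  omega

lemma exists_mem_canonTop_odd_iff : (∃ k, i ≤ k ∧ v ∈ F.canonTop c (2 * k + 1)) ↔
    v ∉ F.rows ∧ 2 * i < F.bIdx c v := by
  rw [hc.mem_rows_iff_even_bIdx, Nat.not_even_iff]
  simp only [hc.mem_canonTop_iff]
  exact ⟨fun ⟨_, _, _⟩ => by omega, fun _ => ⟨F.bIdx c v / 2, by omega, by omega⟩⟩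

lemma exists_mem_canonTop_even_iff : (∃ k, i + 1 ≤ k ∧ v ∈ F.canonTop c (2 * k)) ↔
    v ∈ F.rows ∧ 2 * i + 1 < F.bIdx c v := by
  rw [hc.mem_rows_iff_even_bIdx, Nat.even_iff]
  simp only [hc.mem_canonTop_iff]
  exact ⟨fun ⟨_, _, _⟩ => by omega, fun _ => ⟨F.bIdx c v / 2, by omega, by omega⟩⟩

end Recurrent

theorem eq_rankConfig_bIdx_of_minimal (hc : Minimal F.Recurrent c) :
    c = F.rankConfig (F.bIdx c) :=
  eq_rankConfig_of_minimal hc (fun _ _ => hc.prop.bIdx_ne_of_adj)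
    fun _ => hc.prop.deg_le_add_degIn_bIdx_lt

lemma apply_eq_ncard_of_minimal (hc : Minimal F.Recurrent c) (hk : v ∈ F.canonTop c k)
    (hv : v ≠ 0) : c v = {w | F.Adj w v ∧ k < F.bIdx c w}.ncard := by
  rw [congrFun (eq_rankConfig_bIdx_of_minimal hc) v, rankConfig_of_ne_zero hv,
    hc.prop.mem_canonTop_iff.1 hk]
  simp only [degIn, Set.mem_ofPred_eq, and_comm]

end Ferrers

/-- Every minimal recurrent configuration `c` on `G(F)` satisfies
`c = minrec c`; i.e. `c_j = |{ℓ ∈ Vᵏ : j < ℓ, k > i}|` if `j ∈ Uⁱ` and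
`c_j = |{ℓ ∈ Uᵏ : ℓ < j, k ≥ i}|` if `j ∈ Vⁱ`
(where `Uⁱ = canonTop c (2i)` and `Vⁱ = canonTop c (2i - 1)`). -/
theorem recmin_eq_minrec {n : ℕ} (F : Ferrers n) (c : Fin (n + 1) → ℕ)
    (hc : F.RecMin c) :
    (∀ i : ℕ, ∀ j : Fin (n + 1), j ∈ F.canonTop c (2 * i) → j ≠ 0 →
      c j = {l : Fin (n + 1) | j < l ∧ ∃ k, i ≤ k ∧ l ∈ F.canonTop c (2 * k + 1)}.ncard) ∧
    (∀ i : ℕ, ∀ j : Fin (n + 1), j ∈ F.canonTop c (2 * i + 1) →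
      c j = {l : Fin (n + 1) | l < j ∧ ∃ k, i + 1 ≤ k ∧ l ∈ F.canonTop c (2 * k)}.ncard) := by
  have hrec := hc.1
  refine ⟨fun i j hj hj0 => ?_, fun i j hj => ?_⟩
  · have hrow : j ∈ F.rows := (Ferrers.mem_rows_iff_even hj).2 (even_two_mul i)
    rw [Ferrers.apply_eq_ncard_of_minimal hc.minimal hj hj0]
    simp only [Ferrers.adj_iff_of_mem_rows hrow, hrec.exists_mem_canonTop_odd_iff, and_assoc]
  · have hcol : j ∉ F.rows :=
      (Ferrers.mem_rows_iff_even hj).not.2 (Nat.not_even_two_mul_add_one i)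
    have hj0 : j ≠ 0 := fun h => hcol (h ▸ F.zero_mem)
    rw [Ferrers.apply_eq_ncard_of_minimal hc.minimal hj hj0]
    simp only [Ferrers.adj_iff_of_notMem_rows hcol, hrec.exists_mem_canonTop_even_iff, and_assoc]
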